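/- There exists ε₀ > 0 such that for every ε with 0 < ε ≤ ε₀, every finite set V of at least two points in the Euclidean plane ℝ², and every minimum spanning tree T on V, the open rhombi R_e (with parameter ε), as e ranges over the edges of T, are pairwise disjoint: if e₁ and e₂ are distinct edges of T then R_{e₁} ∩ R_{e₂} = ∅. -/

import Mathlib

/-!
The proof splits into an exchange argument and a computation around a hypothetical common point.

*Exchange.* Deleting an edge `AB` of a minimum spanning tree leaves two components, and any pair
`X`, `Y` with `X` on the side of `A` and `Y` on the side of `B` satisfies `|AB| ≤ |XY|`
(`IsMST.dist_le_of_reachable`). Given two distinct edges, name their endpoints so that the tree path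
through both reads `B - A ⋯ C - D` (possibly `A = C`). Then `|AB| ≤ |BC|`, `|AB| ≤ |BD|`,
`|CD| ≤ |AD|` and `|CD| ≤ |BD|`.

*Geometry.* If the two open rhombi meet, they have a common point `P` different from
`A, B, C, D`. Let `a, b, c, d` be its distances to these points and `U, V, W, Z` the unit vectors
from `P` towards them. For `ε ≤ 1/10`, thinness of the rhombi gives `|U + V| ≤ 1/4` and
`|W + Z| ≤ 1/4` (`norm_unit_add_unit_le`). Since
`|BD|² = (b - d)² + b d |V - Z|²` is at least `|AB|²` and `|CD|²`, necessarily `|V - Z| > 1`, hence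
`|V + W|` and `|U + Z|` exceed `3/4`. As `|BC|² = (b + c)² - b c |V + W|²`, the bound `|AB| ≤ |BC|`
now forces `a < c`, and symmetrically `|CD| ≤ |AD|` forces `c < a`, a contradiction
(`no_common_point`).
-/

/-- Total Euclidean length of the edges of a graph `G` whose vertices are
mapped to the Euclidean plane (identified with `ℂ`) by `f`. -/
noncomputable def graphLength {V : Type*} [Fintype V] (f : V → ℂ) (G : SimpleGraph V) : ℝ := by
  classical
  exact (∑ p : V × V, if G.Adj p.1 p.2 then dist (f p.1) (f p.2) else 0) / 2

/-- `T` is a minimum spanning tree on the finite point set `V` of the Euclidean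
plane (identified with `ℂ`). -/
def IsMST (V : Finset ℂ) (T : SimpleGraph {x // x ∈ V}) : Prop :=
  T.IsTree ∧ ∀ G : SimpleGraph {x // x ∈ V}, G.IsTree →
    graphLength Subtype.val T ≤ graphLength Subtype.val G

/-- The open rhombus `R_{(A,B)}` with parameter `ε`: the interior of the convex
hull of `A`, `B` and the two points `M ± (ε/2)|B-A|·n`, where `M = (A+B)/2` and
`n = i(B-A)/|B-A|` is a unit vector orthogonal to `B - A`. -/
noncomputable def rhombus (ε : ℝ) (A B : ℂ) : Set ℂ :=
  interior (convexHull ℝ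
    {A, B, (A + B) / 2 + ((ε : ℂ) / 2) * Complex.I * (B - A),
      (A + B) / 2 - ((ε : ℂ) / 2) * Complex.I * (B - A)})

open SimpleGraph

/-! ### The exchange property of minimum spanning trees -/

lemma graphLength_sup_edge {V : Type*} [Fintype V] (f : V → ℂ) (H : SimpleGraph V) {x y : V}
    (hxy : x ≠ y) (hH : ¬ H.Adj x y) :
    graphLength f (H ⊔ edge x y) = graphLength f H + dist (f x) (f y) := by
  classical
  have hH' : ¬ H.Adj y x := fun h => hH h.symm
  have key : ∀ p : V × V,
      (if (H ⊔ edge x y).Adj p.1 p.2 then dist (f p.1) (f p.2) else 0) =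
        (if H.Adj p.1 p.2 then dist (f p.1) (f p.2) else 0) +
        ((if p = (x, y) then dist (f x) (f y) else 0) +
          (if p = (y, x) then dist (f x) (f y) else 0)) := by
    rintro ⟨u, v⟩
    simp only [sup_adj, edge_adj, Prod.mk.injEq]
    by_cases h1 : u = x ∧ v = y
    · obtain ⟨rfl, rfl⟩ := h1
      simp [hH, hxy]
    · by_cases h2 : u = y ∧ v = x
      · obtain ⟨rfl, rfl⟩ := h2
        simp [hH', hxy, hxy.symm, _root_.dist_comm]
      · simp [h1, h2]
  have : graphLength f (H ⊔ edge x y) =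
      (∑ p : V × V, if (H ⊔ edge x y).Adj p.1 p.2 then dist (f p.1) (f p.2) else 0) / 2 := by
    unfold graphLength
    congr!
  rw [this, Finset.sum_congr rfl fun p _ => key p, Finset.sum_add_distrib, Finset.sum_add_distrib]
  simp only [Finset.sum_ite_eq', Finset.mem_univ, if_true]
  have : graphLength f H =
      (∑ p : V × V, if H.Adj p.1 p.2 then dist (f p.1) (f p.2) else 0) / 2 := by
    unfold graphLength
    congr!
  rw [this]
  ring

/-- Deleting an edge of a connected graph leaves every vertex connected to one of its ends. -/
lemma reachable_deleteEdges_or {V : Type*} {T : SimpleGraph V} (hT : T.Connected) (A B w : V) :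
    (T.deleteEdges {s(A, B)}).Reachable A w ∨ (T.deleteEdges {s(A, B)}).Reachable B w := by
  set H := T.deleteEdges {s(A, B)} with hHdef
  have step : ∀ {u v : V}, T.Walk u v → (H.Reachable A u ∨ H.Reachable B u) →
      (H.Reachable A v ∨ H.Reachable B v) := by
    intro u v p
    induction p with
    | nil => exact id
    | @cons u v w h p ih =>
      intro hu
      apply ih
      by_cases he : s(u, v) = s(A, B)
      · rcases Sym2.eq_iff.1 he with ⟨-, rfl⟩ | ⟨-, rfl⟩
        · exact Or.inr (Reachable.refl _)
        · exact Or.inl (Reachable.refl _)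
      · have hadj : H.Adj u v := by simp [hHdef, deleteEdges_adj, h, he]
        exact hu.imp (·.trans hadj.reachable) (·.trans hadj.reachable)
  obtain ⟨p⟩ := hT.preconnected A w
  exact step p (Or.inl (Reachable.refl _))

/-- An edge `AB` of a minimum spanning tree is a shortest connection between the two components
left by its removal: otherwise exchanging it for `XY` would give a shorter spanning tree. -/
lemma IsMST.dist_le_of_reachable {V : Finset ℂ} {T : SimpleGraph {x // x ∈ V}} (hT : IsMST V T)
    {A B X Y : {x // x ∈ V}} (hAB : T.Adj A B)
    (hX : (T.deleteEdges {s(A, B)}).Reachable A X)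
    (hY : (T.deleteEdges {s(A, B)}).Reachable B Y) :
    dist (A : ℂ) B ≤ dist (X : ℂ) Y := by
  obtain ⟨hTree, hmin⟩ := hT
  have hbridge : ¬ (T.deleteEdges {s(A, B)}).Reachable A B :=
    isBridge_iff.1 (isAcyclic_iff_forall_adj_isBridge.1 hTree.isAcyclic hAB)
  set H := T.deleteEdges {s(A, B)} with hHdef
  have hXY : ¬ H.Reachable X Y := fun h => hbridge ((hX.trans h).trans hY.symm)
  have hTH : T = H ⊔ edge A B := by
    ext u v
    simp only [hHdef, sup_adj, deleteEdges_adj, adj_edge, Set.mem_singleton_iff]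
    constructor
    · intro h
      by_cases he : s(u, v) = s(A, B)
      · exact Or.inr ⟨he.symm, h.ne⟩
      · exact Or.inl ⟨h, he⟩
    · rintro (h | ⟨h, -⟩)
      · exact h.1
      · rwa [← mem_edgeSet, ← h]
  have hacyc : (H ⊔ edge X Y).IsAcyclic :=
    (hTree.isAcyclic.anti (deleteEdges_le _)).sup_edge_of_not_reachable hXY
  have hXY' : X ≠ Y := fun h => hXY (h ▸ Reachable.refl _)
  have hle : H ≤ H ⊔ edge X Y := le_sup_left
  have hadj : (H ⊔ edge X Y).Adj X Y := by simp [sup_adj, edge_adj, hXY']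
  have hA : ∀ w, (H ⊔ edge X Y).Reachable A w := by
    intro w
    rcases reachable_deleteEdges_or hTree.connected A B w with h | h
    · exact h.mono hle
    · exact (((hX.mono hle).trans hadj.reachable).trans (hY.mono hle).symm).trans (h.mono hle)
  have hconn : (H ⊔ edge X Y).Connected :=
    haveI : Nonempty {x // x ∈ V} := ⟨A⟩
    Connected.mk fun u v => (hA u).symm.trans (hA v)
  have h1 := hmin _ ⟨hconn, hacyc⟩
  have h2 := graphLength_sup_edge Subtype.val H hAB.ne (fun h => hbridge h.reachable)
  rw [← hTH] at h2
  rw [graphLength_sup_edge Subtype.val H hXY' (fun h => hXY h.reachable)] at h1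
  linarith

/-! ### Points of a thin rhombus -/

/-- The closed rhombus lies in the intersection of the two cones of slope `ε` with apexes `A` and
`B` and axis `AB`, written in the coordinate `z = (P - A) / (B - A)`. -/
lemma coord_of_mem_hull {ε : ℝ} (hε : 0 < ε) {A B P : ℂ} (hAB : A ≠ B)
    (hP : P ∈ convexHull ℝ
      {A, B, (A + B) / 2 + ((ε : ℂ) / 2) * Complex.I * (B - A),
        (A + B) / 2 - ((ε : ℂ) / 2) * Complex.I * (B - A)}) :
    ∃ z : ℂ, P = A + z * (B - A) ∧ |z.im| ≤ ε * z.re ∧ |z.im| ≤ ε * (1 - z.re) := by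
  have hBA : B - A ≠ 0 := sub_ne_zero.2 hAB.symm
  refine convexHull_min (t := {P : ℂ | ∃ z : ℂ, P = A + z * (B - A) ∧
    |z.im| ≤ ε * z.re ∧ |z.im| ≤ ε * (1 - z.re)}) ?_ ?_ hP
  · intro Q hQ
    simp only [Set.mem_insert_iff, Set.mem_singleton_iff] at hQ
    rcases hQ with rfl | rfl | rfl | rfl
    · exact ⟨0, by simp, by simp, by simp [hε.le]⟩
    · exact ⟨1, by simp, by simp [hε.le], by simp⟩
    · refine ⟨⟨1 / 2, ε / 2⟩, ?_, ?_, ?_⟩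
      · have : (⟨1 / 2, ε / 2⟩ : ℂ) = 1 / 2 + (ε : ℂ) / 2 * Complex.I := by
          apply Complex.ext <;> simp
        rw [this]; ring
      · simp only [abs_of_pos (half_pos hε)]; linarith
      · simp only [abs_of_pos (half_pos hε)]; linarith
    · refine ⟨⟨1 / 2, -(ε / 2)⟩, ?_, ?_, ?_⟩
      · have : (⟨1 / 2, -(ε / 2)⟩ : ℂ) = 1 / 2 - (ε : ℂ) / 2 * Complex.I := by
          apply Complex.ext <;> simp
        rw [this]; ring
      · simp only [abs_neg, abs_of_pos (half_pos hε)]; linarith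
      · simp only [abs_neg, abs_of_pos (half_pos hε)]; linarith
  · rintro _ ⟨z, rfl, hz1, hz2⟩ _ ⟨w, rfl, hw1, hw2⟩ s t hs ht hst
    refine ⟨s * z + t * w, ?_, ?_, ?_⟩
    · have : (s : ℂ) + t = 1 := by exact_mod_cast hst
      simp only [Complex.real_smul]
      linear_combination A * this
    all_goals
      simp only [Complex.add_im, Complex.add_re, Complex.re_ofReal_mul, Complex.im_ofReal_mul]
      rw [abs_le] at *
      obtain rfl : s = 1 - t := by linarith
      constructor <;> nlinarith

/-- From a point of a thin rhombus the ends of the major diagonal are seen in nearly opposite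
directions. -/
lemma norm_unit_add_unit_le {ε : ℝ} (hε : 0 < ε) (hε' : ε ≤ 1 / 10) {A B P : ℂ} (hAB : A ≠ B)
    (hP : P ∈ convexHull ℝ
      {A, B, (A + B) / 2 + ((ε : ℂ) / 2) * Complex.I * (B - A),
        (A + B) / 2 - ((ε : ℂ) / 2) * Complex.I * (B - A)})
    {a b : ℝ} {U V : ℂ} (ha : 0 < a) (hb : 0 < b) (hU : ‖U‖ = 1) (hV : ‖V‖ = 1)
    (hA : A - P = a • U) (hB : B - P = b • V) : ‖U + V‖ ≤ 1 / 4 := by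
  obtain ⟨z, rfl, h1, h2⟩ := coord_of_mem_hull hε hAB hP
  have hL : 0 < Complex.normSq (B - A) := Complex.normSq_pos.2 (sub_ne_zero.2 hAB.symm)
  set L := Complex.normSq (B - A) with hLdef
  set x := z.re
  set y := z.im
  have hx : 0 ≤ x := by
    have := (abs_nonneg y).trans h1
    exact nonneg_of_mul_nonneg_right this hε
  have hx' : 0 ≤ 1 - x := by
    have := (abs_nonneg y).trans h2
    exact nonneg_of_mul_nonneg_right this hε
  have hxy1 : y ^ 2 ≤ (1 / 100) * x ^ 2 := by
    have : |y| ≤ (1 / 10) * x := h1.trans (by gcongr)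
    rw [← sq_abs y]; nlinarith [abs_nonneg y]
  have hxy2 : y ^ 2 ≤ (1 / 100) * (1 - x) ^ 2 := by
    have : |y| ≤ (1 / 10) * (1 - x) := h2.trans (by gcongr)
    rw [← sq_abs y]; nlinarith [abs_nonneg y]
  have hxy3 : y ^ 2 ≤ (1 / 100) * (x * (1 - x)) := by
    have k1 : |y| ≤ (1 / 10) * x := h1.trans (by gcongr)
    have k2 : |y| ≤ (1 / 10) * (1 - x) := h2.trans (by gcongr)
    rw [← sq_abs y]; nlinarith [abs_nonneg y, mul_le_mul k1 k2 (abs_nonneg y) (by positivity)]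
  have na : a ^ 2 = (x ^ 2 + y ^ 2) * L := by
    have : a ^ 2 = ‖A - (A + z * (B - A))‖ ^ 2 := by
      rw [hA, norm_smul, hU, mul_one, Real.norm_eq_abs, sq_abs]
    rw [this, show A - (A + z * (B - A)) = -(z * (B - A)) by ring, norm_neg,
      ← Complex.normSq_eq_norm_sq, Complex.normSq_mul, Complex.normSq_apply z]
    ring
  have nb : b ^ 2 = ((1 - x) ^ 2 + y ^ 2) * L := by
    have : b ^ 2 = ‖B - (A + z * (B - A))‖ ^ 2 := by
      rw [hB, norm_smul, hV, mul_one, Real.norm_eq_abs, sq_abs]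
    rw [this, show B - (A + z * (B - A)) = (1 - z) * (B - A) by ring,
      ← Complex.normSq_eq_norm_sq, Complex.normSq_mul, Complex.normSq_apply (1 - z)]
    simp only [Complex.sub_re, Complex.sub_im, Complex.one_re, Complex.one_im]
    ring
  have nab : ‖a • U - b • V‖ ^ 2 = L := by
    rw [← hA, ← hB, show A - (A + z * (B - A)) - (B - (A + z * (B - A))) = -(B - A) by ring,
      norm_neg, ← Complex.normSq_eq_norm_sq]
  rw [norm_sub_sq_real, norm_smul, norm_smul, hU, hV, real_inner_smul_left, real_inner_smul_right,
    Real.norm_eq_abs, Real.norm_eq_abs, abs_of_pos ha, abs_of_pos hb] at nab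
  have hadd := norm_add_sq_real U V
  rw [hU, hV] at hadd
  set i := inner ℝ U V
  set m := x * (1 - x)
  have hab : a * b ≤ (101 / 100) * m * L := by
    have hm : 0 ≤ m := mul_nonneg hx hx'
    refine (sq_le_sq₀ (by positivity) (by positivity)).1 ?_
    calc (a * b) ^ 2 = a ^ 2 * b ^ 2 := by ring
      _ = ((x ^ 2 + y ^ 2) * ((1 - x) ^ 2 + y ^ 2)) * L ^ 2 := by rw [na, nb]; ring
      _ ≤ (((101 / 100) * x ^ 2) * ((101 / 100) * (1 - x) ^ 2)) * L ^ 2 := by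
          gcongr <;> linarith
      _ = _ := by simp only [m]; ring
  have hi : a * b * i = -(m - y ^ 2) * L := by
    simp only [m]; nlinarith
  have hab0 : 0 < a * b := mul_pos ha hb
  have : i ≤ -(31 / 32) := by
    by_contra hcon
    push Not at hcon
    have k := mul_lt_mul_of_pos_left hcon hab0
    nlinarith
  nlinarith [norm_nonneg (U + V)]

/-! ### The configuration `B - A ⋯ C - D` -/

lemma norm_sub_sq_unit {a b : ℝ} {U V : ℂ} (hU : ‖U‖ = 1) (hV : ‖V‖ = 1) :
    ‖a • U - b • V‖ ^ 2 = (a + b) ^ 2 - a * b * ‖U + V‖ ^ 2 := by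
  rw [norm_sub_sq_real, norm_add_sq_real, norm_smul, norm_smul, hU, hV, real_inner_smul_left,
    real_inner_smul_right, mul_one, mul_one, Real.norm_eq_abs, Real.norm_eq_abs, sq_abs, sq_abs]
  ring

/-- The metric core, with origin at the common point of the rhombi: the four points are `a • U`,
`b • V`, `c • W`, `d • Z`. -/
lemma no_common_point {a b c d : ℝ} {U V W Z : ℂ} (ha : 0 < a) (hb : 0 < b) (hc : 0 < c)
    (hd : 0 < d) (hU : ‖U‖ = 1) (hV : ‖V‖ = 1) (hW : ‖W‖ = 1) (hZ : ‖Z‖ = 1)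
    (hUV : ‖U + V‖ ≤ 1 / 4) (hWZ : ‖W + Z‖ ≤ 1 / 4)
    (hBC : ‖a • U - b • V‖ ≤ ‖b • V - c • W‖) (hBD : ‖a • U - b • V‖ ≤ ‖b • V - d • Z‖)
    (hAD : ‖c • W - d • Z‖ ≤ ‖a • U - d • Z‖) (hBD' : ‖c • W - d • Z‖ ≤ ‖b • V - d • Z‖) :
    False := by
  have sq {x y : ℝ} (hx : 0 ≤ x) (h : x ≤ y) : x ^ 2 ≤ y ^ 2 := by gcongr
  replace hBC := sq (norm_nonneg _) hBC
  replace hBD := sq (norm_nonneg _) hBD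
  replace hAD := sq (norm_nonneg _) hAD
  replace hBD' := sq (norm_nonneg _) hBD'
  rw [norm_sub_sq_unit hU hV] at hBC hBD
  rw [norm_sub_sq_unit hW hZ] at hAD hBD'
  rw [norm_sub_sq_unit hV hW] at hBC
  rw [norm_sub_sq_unit hU hZ] at hAD
  rw [norm_sub_sq_unit hV hZ] at hBD hBD'
  have hpar : ‖V + Z‖ ^ 2 = 4 - ‖V - Z‖ ^ 2 := by
    rw [norm_add_sq_real, norm_sub_sq_real, hV, hZ]; ring
  rw [hpar] at hBD hBD'
  have hUV2 : ‖U + V‖ ^ 2 ≤ 1 / 16 := by nlinarith [norm_nonneg (U + V)]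
  have hWZ2 : ‖W + Z‖ ^ 2 ≤ 1 / 16 := by nlinarith [norm_nonneg (W + Z)]
  have e1 := mul_le_mul_of_nonneg_left hUV2 (mul_pos ha hb).le
  have e2 := mul_le_mul_of_nonneg_left hWZ2 (mul_pos hc hd).le
  have hab := mul_pos ha hb
  have hcd := mul_pos hc hd
  have hbd := mul_pos hb hd
  have hq : 1 < ‖V - Z‖ := by
    by_contra hcon
    push Not at hcon
    have hq2 : ‖V - Z‖ ^ 2 ≤ 1 := by nlinarith [norm_nonneg (V - Z)]
    have e3 := mul_le_mul_of_nonneg_left hq2 hbd.le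
    rcases le_total d b with h | h
    · linarith [mul_le_mul_of_nonneg_left h hd.le, sq_nonneg a]
    · linarith [mul_le_mul_of_nonneg_left h hb.le, sq_nonneg c]
  have hs : 3 / 4 < ‖V + W‖ := by
    have := norm_sub_le (V + W) (W + Z)
    rw [show V + W - (W + Z) = V - Z by ring] at this
    linarith
  have ht : 3 / 4 < ‖U + Z‖ := by
    have := norm_sub_le (U + V) (U + Z)
    rw [show U + V - (U + Z) = V - Z by ring] at this
    linarith
  have hs2 : 9 / 16 ≤ ‖V + W‖ ^ 2 := by
    have := sq (by norm_num) hs.le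
    linarith
  have ht2 : 9 / 16 ≤ ‖U + Z‖ ^ 2 := by
    have := sq (by norm_num) ht.le
    linarith
  have e4 := mul_le_mul_of_nonneg_left hs2 (mul_pos hb hc).le
  have e5 := mul_le_mul_of_nonneg_left ht2 (mul_pos ha hd).le
  rcases le_total c a with h | h
  · linarith [mul_le_mul_of_nonneg_left h hb.le, sq hc.le h]
  · linarith [mul_le_mul_of_nonneg_left h hd.le, sq ha.le h]

lemma exists_polar {A P : ℂ} (h : P ≠ A) : ∃ (a : ℝ) (U : ℂ), 0 < a ∧ ‖U‖ = 1 ∧ A - P = a • U := by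
  have h0 : A - P ≠ 0 := sub_ne_zero.2 h.symm
  have hn : ‖A - P‖ ≠ 0 := norm_ne_zero_iff.2 h0
  refine ⟨‖A - P‖, ‖A - P‖⁻¹ • (A - P), norm_pos_iff.2 h0, ?_, ?_⟩
  · rw [norm_smul, norm_inv, norm_norm, inv_mul_cancel₀ hn]
  · rw [smul_smul, mul_inv_cancel₀ hn, one_smul]

lemma disjoint_rhombus_of_dist_le {ε : ℝ} (hε : 0 < ε) (hε' : ε ≤ 1 / 10) {A B C D : ℂ}
    (hAB : A ≠ B) (hCD : C ≠ D) (hBC : dist A B ≤ dist B C) (hBD : dist A B ≤ dist B D)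
    (hAD : dist C D ≤ dist A D) (hBD' : dist C D ≤ dist B D) :
    Disjoint (rhombus ε A B) (rhombus ε C D) := by
  rw [Set.disjoint_iff_inter_eq_empty]
  by_contra hne
  have hopen : IsOpen (rhombus ε A B ∩ rhombus ε C D) := isOpen_interior.inter isOpen_interior
  -- A nonempty open set is not contained in the finite set of endpoints.
  have hdense : Dense (({A, B, C, D} : Set ℂ)ᶜ) :=
    (Set.toFinite ({A, B, C, D} : Set ℂ)).countable.dense_compl ℝ
  obtain ⟨P, ⟨hP1, hP2⟩, hP⟩ :=
    hdense.inter_open_nonempty _ hopen (Set.nonempty_iff_ne_empty.2 hne)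
  simp only [Set.mem_compl_iff, Set.mem_insert_iff, Set.mem_singleton_iff, not_or] at hP
  obtain ⟨hA, hB, hC, hD⟩ := hP
  obtain ⟨a, U, ha, hU, eA⟩ := exists_polar hA
  obtain ⟨b, V, hb, hV, eB⟩ := exists_polar hB
  obtain ⟨c, W, hc, hW, eC⟩ := exists_polar hC
  obtain ⟨d, Z, hd, hZ, eD⟩ := exists_polar hD
  have hUV := norm_unit_add_unit_le hε hε' hAB (interior_subset hP1) ha hb hU hV eA eB
  have hWZ := norm_unit_add_unit_le hε hε' hCD (interior_subset hP2) hc hd hW hZ eC eD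
  refine no_common_point ha hb hc hd hU hV hW hZ hUV hWZ ?_ ?_ ?_ ?_ <;>
    simpa only [← eA, ← eB, ← eC, ← eD, sub_sub_sub_cancel_right, ← dist_eq_norm]

lemma rhombus_comm (ε : ℝ) (A B : ℂ) : rhombus ε A B = rhombus ε B A := by
  unfold rhombus
  congr 2
  rw [show (B + A) / 2 + (ε : ℂ) / 2 * Complex.I * (A - B) =
      (A + B) / 2 - (ε : ℂ) / 2 * Complex.I * (B - A) by ring,
    show (B + A) / 2 - (ε : ℂ) / 2 * Complex.I * (A - B) =
      (A + B) / 2 + (ε : ℂ) / 2 * Complex.I * (B - A) by ring]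
  ext Q
  simp only [Set.mem_insert_iff, Set.mem_singleton_iff]
  tauto

theorem mst_rhombi_pairwise_disjoint :
    ∃ ε₀ : ℝ, 0 < ε₀ ∧ ∀ ε : ℝ, 0 < ε → ε ≤ ε₀ →
      ∀ V : Finset ℂ, 2 ≤ V.card →
      ∀ T : SimpleGraph {x // x ∈ V}, IsMST V T →
      ∀ A B C D : {x // x ∈ V}, T.Adj A B → T.Adj C D → s(A, B) ≠ s(C, D) →
        Disjoint (rhombus ε (A : ℂ) (B : ℂ)) (rhombus ε (C : ℂ) (D : ℂ)) := by
  refine ⟨1 / 10, by norm_num, ?_⟩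
  intro ε hε hε' V _ T hT A B C D hAB hCD hne
  -- Swapping `A, B` and `C, D` if necessary, the tree path reads `B - A ⋯ C - D`.
  wlog hC : (T.deleteEdges {s(A, B)}).Reachable A C generalizing A B
  · rw [rhombus_comm ε A B]
    refine this B A hAB.symm (by rwa [Sym2.eq_swap]) ?_
    rw [Sym2.eq_swap]
    exact (reachable_deleteEdges_or hT.1.connected A B C).resolve_left hC
  have hD : (T.deleteEdges {s(A, B)}).Reachable A D :=
    hC.trans (Adj.reachable (by simp [deleteEdges_adj, hCD, hne.symm]))
  wlog hA : (T.deleteEdges {s(C, D)}).Reachable C A generalizing C D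
  · rw [rhombus_comm ε C D]
    refine this D C hCD.symm (by rwa [Sym2.eq_swap (a := D)]) hD hC ?_
    rw [Sym2.eq_swap]
    exact (reachable_deleteEdges_or hT.1.connected C D A).resolve_left hA
  have hB : (T.deleteEdges {s(C, D)}).Reachable C B :=
    hA.trans (Adj.reachable (by simp [deleteEdges_adj, hAB, hne]))
  refine disjoint_rhombus_of_dist_le hε hε' (Subtype.coe_injective.ne hAB.ne)
    (Subtype.coe_injective.ne hCD.ne) ?_ ?_ ?_ ?_
  · rw [_root_.dist_comm (B : ℂ)]
    exact hT.dist_le_of_reachable hAB hC (Reachable.refl _)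
  · rw [_root_.dist_comm (B : ℂ)]
    exact hT.dist_le_of_reachable hAB hD (Reachable.refl _)
  · exact hT.dist_le_of_reachable hCD hA (Reachable.refl _)
  · exact hT.dist_le_of_reachable hCD hB (Reachable.refl _)
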